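/- arXiv:1111.3787 — 3 statements merged into one kernel-verified Lean document; each statement's English description precedes it below -/
import Mathlib

section
/- With K = ℚ(ζ + ζ^{-1}) for ζ a primitive 2^r-th root of unity (r ≥ 5), n = 2^{r-2}, e_0 = 1, e_i = ζ^i + ζ^{-i}, and α = 4 + e_1 - 2e_2 - e_3, let G be the n×n rational matrix with entries G_{ij} = Tr_{K/ℚ}(α e_{i-1} e_{j-1}) / 2^{r-1} for 1 ≤ i, j ≤ n. Then there exists a unimodular integer matrix U (an n×n integer matrix with determinant ±1) such that G = U · G_{D_n} · Uᵀ, where G_{D_n} = B Bᵀ is the Gram matrix of the standard basis of the lattice D_n. In other words, the lattice (1/√(2^{r-1}))·σ_α(O_K) ⊂ ℝ^n is a rotated (isometric) copy of D_n. -/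
open scoped IntermediateField
open Matrix

/-- The standard basis matrix `B` of the lattice `Dₙ`: the rows are
`β₁ = -ε₁ - ε₂` and `βₖ = ε_{k-1} - ε_k` for `2 ≤ k ≤ n` (here `0`-indexed). -/
def DnBasisMatrix (n : ℕ) : Matrix (Fin n) (Fin n) ℤ :=
  Matrix.of fun i j =>
    if (i : ℕ) = 0 then (if (j : ℕ) ≤ 1 then -1 else 0)
    else if (j : ℕ) + 1 = (i : ℕ) then 1 else if j = i then -1 else 0

/-- Kronecker delta at `0` on the integers. -/
def intDelta (k : ℤ) : ℤ := if k = 0 then 1 else 0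

theorem sum_intDelta_sub_mul (n : ℕ) (g : ℤ → ℤ) (a : ℤ) :
    ∑ k : Fin n, intDelta (a - (k : ℕ)) * g (k : ℕ) = if 0 ≤ a ∧ a < n then g a else 0 := by
  split_ifs with h
  · rw [Finset.sum_eq_single (⟨a.toNat, by omega⟩ : Fin n)]
    · simp [intDelta, h.1]
    · intro b _ hb
      have : a - (b : ℕ) ≠ 0 := fun h0 => hb (Fin.ext (by simp; omega))
      simp [intDelta, this]
    · simp
  · refine Finset.sum_eq_zero fun k _ => ?_
    have : a - (k : ℕ) ≠ 0 := by have := k.2; omega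
    simp [intDelta, this]

/-- The `k`-th coordinate of the vector `ε_a` (0-indexed), where `ε` is extended to `-n ≤ a ≤ n` by
`ε_{-1-a} = -ε_a` and `ε_n = ε_{n-1}`. -/
def reflectedUnit (n : ℕ) (a k : ℤ) : ℤ :=
  intDelta (a - k) - intDelta (a + k + 1) + intDelta (a + k + 1 - 2 * n)

theorem sum_reflectedUnit_mul {n : ℕ} (hn : 8 ≤ n) {a b : ℤ} (ha : -2 ≤ a) (ha' : a ≤ n)
    (hb : -2 ≤ b) (hb' : b ≤ n) :
    ∑ k : Fin n, reflectedUnit n a (k : ℕ) * reflectedUnit n b (k : ℕ) =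
      intDelta (a - b) - intDelta (a + b + 1) + intDelta (a + b + 1 - 2 * n) := by
  have key : ∃ s c : ℤ, 0 ≤ c ∧ c < n ∧
      (∀ k : Fin n, reflectedUnit n a (k : ℕ) = s * intDelta (c - (k : ℕ))) ∧
      s * reflectedUnit n b c =
        intDelta (a - b) - intDelta (a + b + 1) + intDelta (a + b + 1 - 2 * n) := by
    rcases lt_or_ge a 0 with h0 | h0
    · refine ⟨-1, -1 - a, by omega, by omega, fun k => ?_, ?_⟩
      · have := k.2
        unfold reflectedUnit intDelta
        split_ifs <;> omega
      · unfold reflectedUnit intDelta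
        split_ifs <;> omega
    · rcases lt_or_ge a n with h1 | h1
      · refine ⟨1, a, by omega, by omega, fun k => ?_, ?_⟩
        · have := k.2
          unfold reflectedUnit intDelta
          split_ifs <;> omega
        · unfold reflectedUnit intDelta
          split_ifs <;> omega
      · refine ⟨1, n - 1, by omega, by omega, fun k => ?_, ?_⟩
        · have := k.2
          unfold reflectedUnit intDelta
          split_ifs <;> omega
        · unfold reflectedUnit intDelta
          split_ifs <;> omega
  obtain ⟨s, c, hc, hc', hs, hsb⟩ := key
  rw [← hsb, ← (sum_intDelta_sub_mul n (reflectedUnit n b) c).trans (if_pos ⟨hc, hc'⟩),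
    Finset.mul_sum]
  exact Finset.sum_congr rfl fun k _ => by rw [hs, mul_assoc]

/-- The `k`-th coordinate of `(2 + c₁) cᵢ`, where `cᵢ = ζ^i + ζ^{-i}`, in the orthonormal basis
of the rotated lattice `ℤⁿ` attached to `2 - c₁`. -/
def rotatedCoord (n : ℕ) (i k : ℤ) : ℤ :=
  reflectedUnit n (i + 1) k + reflectedUnit n i k
    - reflectedUnit n (i - 1) k - reflectedUnit n (i - 2) k

/-- The values of `m ↦ Tr(c_m) / 2n`, where `c_m = ζ^m + ζ^{-m}`, for `|m| < 4n`. -/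
def normalizedTrace (n : ℕ) (m : ℤ) : ℤ :=
  intDelta m - intDelta (m - 2 * n) - intDelta (m + 2 * n)

/-- The values of `m ↦ Tr(α c_m) / 2n` for `|m| < 4n - 3`. -/
def twistedTrace (n : ℕ) (m : ℤ) : ℤ :=
  4 * normalizedTrace n m + (normalizedTrace n (m + 1) + normalizedTrace n (m - 1))
    - 2 * (normalizedTrace n (m + 2) + normalizedTrace n (m - 2))
    - (normalizedTrace n (m + 3) + normalizedTrace n (m - 3))

theorem intDelta_eq_zero {k : ℤ} (h : k ≠ 0) : intDelta k = 0 := if_neg h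

theorem normalizedTrace_of_nonneg {n : ℕ} {m : ℤ} (h : -2 * (n : ℤ) < m) :
    normalizedTrace n m = intDelta m - intDelta (m - 2 * n) := by
  rw [normalizedTrace, intDelta_eq_zero (k := m + 2 * n) (by omega), sub_zero]

theorem normalizedTrace_of_abs_lt {n : ℕ} {m : ℤ} (h : -2 * (n : ℤ) < m) (h' : m < 2 * n) :
    normalizedTrace n m = intDelta m := by
  rw [normalizedTrace_of_nonneg h, intDelta_eq_zero (k := m - 2 * n) (by omega), sub_zero]

theorem sum_rotatedCoord_mul {n : ℕ} (hn : 8 ≤ n) (i j : Fin n) :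
    ∑ k : Fin n, rotatedCoord n (i : ℕ) (k : ℕ) * rotatedCoord n (j : ℕ) (k : ℕ) =
      twistedTrace n ((i : ℕ) + (j : ℕ)) + twistedTrace n ((i : ℕ) - (j : ℕ)) := by
  obtain ⟨i, hi⟩ := i
  obtain ⟨j, hj⟩ := j
  simp only [rotatedCoord, add_mul, sub_mul, mul_add, mul_sub, Finset.sum_add_distrib,
    Finset.sum_sub_distrib]
  repeat rw [sum_reflectedUnit_mul hn (by omega) (by omega) (by omega) (by omega)]
  unfold twistedTrace
  iterate 7 rw [normalizedTrace_of_nonneg (by omega)]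
  iterate 7 rw [normalizedTrace_of_abs_lt (by omega) (by omega)]
  ring_nf

/-- The `k`-th coordinate of `(2 + c₁) eᵢ`, which is `rotatedCoord n i k` for `i ≠ 0` and half of
it for `i = 0`. -/
def basisCoord (n : ℕ) (i k : ℤ) : ℤ :=
  reflectedUnit n i k + reflectedUnit n (i + 1) k
    - if 2 ≤ i then reflectedUnit n (i - 2) k + reflectedUnit n (i - 1) k else 0

theorem reflectedUnit_neg {n : ℕ} {a b k : ℤ} (hab : a + b = -1) (hb : b + 2 ≤ n) (hb' : -1 ≤ b)
    (hk : k < n) : reflectedUnit n a k = -reflectedUnit n b k := by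
  unfold reflectedUnit intDelta
  split_ifs <;> omega

theorem reflectedUnit_of_lt {n : ℕ} {a k : ℤ} (ha : 0 ≤ a) (ha' : a < n) (hk : 0 ≤ k)
    (hk' : k < n) : reflectedUnit n a k = intDelta (a - k) := by
  unfold reflectedUnit intDelta
  split_ifs <;> omega

theorem reflectedUnit_self {n : ℕ} {k : ℤ} (hk : 0 ≤ k) (hk' : k < n) :
    reflectedUnit n n k = intDelta (n - 1 - k) := by
  unfold reflectedUnit intDelta
  split_ifs <;> omega

theorem rotatedCoord_eq {n : ℕ} (hn : 8 ≤ n) (i k : Fin n) :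
    rotatedCoord n (i : ℕ) (k : ℕ) =
      (if (i : ℕ) = 0 then 2 else 1) * basisCoord n (i : ℕ) (k : ℕ) := by
  obtain ⟨i, hi⟩ := i
  obtain ⟨k, hk⟩ := k
  rcases Nat.lt_or_ge i 2 with h | h
  · have h1 : reflectedUnit n (-1) k = -reflectedUnit n 0 k :=
      reflectedUnit_neg (by omega) (by omega) (by omega) (by omega)
    have h2 : reflectedUnit n (-2) k = -reflectedUnit n 1 k :=
      reflectedUnit_neg (by omega) (by omega) (by omega) (by omega)
    interval_cases i <;> norm_num [rotatedCoord, basisCoord, h1, h2] <;> ring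
  · have h2 : (2 : ℤ) ≤ i := by omega
    have h0 : i ≠ 0 := by omega
    simp only [rotatedCoord, basisCoord, if_pos h2, if_neg h0]
    ring

/-- The matrix with rows `ε_i + ε_{i+1}`, where `ε_n = ε_{n-1}`. -/
def adjacentSum (n : ℕ) : Matrix (Fin n) (Fin n) ℤ :=
  Matrix.of fun i k => reflectedUnit n (i : ℕ) (k : ℕ) + reflectedUnit n ((i : ℕ) + 1) (k : ℕ)

/-- The unipotent lower triangular matrix with rows `ε_i - ε_{i-2}`. -/
def secondLowerDiff (n : ℕ) : Matrix (Fin n) (Fin n) ℤ :=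
  Matrix.of fun i k => intDelta ((i : ℕ) - (k : ℕ)) - intDelta ((i : ℕ) - 2 - (k : ℕ))

/-- The lower triangular matrix with rows `ε_{i-1} - ε_i`. -/
def lowerDiff (n : ℕ) : Matrix (Fin n) (Fin n) ℤ :=
  Matrix.of fun i k => intDelta ((i : ℕ) - 1 - (k : ℕ)) - intDelta ((i : ℕ) - (k : ℕ))

/-- The upper triangular matrix with rows `ε_0` and `ε_i + ε_{i+1}` for `i ≥ 1`. -/
def upperSum (n : ℕ) : Matrix (Fin n) (Fin n) ℤ :=
  Matrix.of fun i k => intDelta ((i : ℕ) - (k : ℕ)) +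
    if (i : ℕ) = 0 then 0 else intDelta ((i : ℕ) + 1 - (k : ℕ))

theorem isUnit_det_secondLowerDiff (n : ℕ) : IsUnit (secondLowerDiff n).det := by
  have h : (secondLowerDiff n).BlockTriangular OrderDual.toDual := fun i j hij => by
    have : (i : ℕ) < j := hij
    simp only [secondLowerDiff, Matrix.of_apply]
    rw [intDelta_eq_zero (by omega), intDelta_eq_zero (by omega), sub_zero]
  rw [Matrix.det_of_isLowerTriangular _ h]
  simp [secondLowerDiff, intDelta]

theorem isUnit_det_lowerDiff (n : ℕ) : IsUnit (lowerDiff n).det := by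
  have h : (lowerDiff n).BlockTriangular OrderDual.toDual := fun i j hij => by
    have : (i : ℕ) < j := hij
    simp only [lowerDiff, Matrix.of_apply]
    rw [intDelta_eq_zero (by omega), intDelta_eq_zero (by omega), sub_zero]
  rw [Matrix.det_of_isLowerTriangular _ h]
  simp [lowerDiff, intDelta, sub_sub, IsUnit.pow]

theorem isUnit_det_upperSum (n : ℕ) : IsUnit (upperSum n).det := by
  have h : (upperSum n).BlockTriangular id := fun i j hij => by
    have : (j : ℕ) < i := hij
    simp only [upperSum, Matrix.of_apply]
    rw [intDelta_eq_zero (by omega), intDelta_eq_zero (by omega), ite_self, add_zero]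
  rw [Matrix.det_of_isUpperTriangular h]
  simp [upperSum, intDelta, add_sub_right_comm]

theorem secondLowerDiff_mul_adjacentSum (n : ℕ) (i k : Fin n) :
    (secondLowerDiff n * adjacentSum n) i k = basisCoord n (i : ℕ) (k : ℕ) := by
  simp only [Matrix.mul_apply, secondLowerDiff, adjacentSum, Matrix.of_apply, sub_mul,
    Finset.sum_sub_distrib]
  have h := sum_intDelta_sub_mul n
    (fun a => reflectedUnit n a (k : ℕ) + reflectedUnit n (a + 1) (k : ℕ))
  have hi := i.2
  rw [h, h, if_pos (by omega), basisCoord]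
  congr 1
  refine if_congr (by omega) ?_ rfl
  ring_nf

theorem lowerDiff_mul_adjacentSum {n : ℕ} (hn : 8 ≤ n) :
    lowerDiff n * adjacentSum n = upperSum n * DnBasisMatrix n := by
  ext i k
  obtain ⟨i, hi⟩ := i
  obtain ⟨k, hk⟩ := k
  have hD : ∀ j : Fin n, DnBasisMatrix n j ⟨k, hk⟩ =
      (fun a : ℤ => if a = 0 then (if (k : ℤ) ≤ 1 then -1 else 0)
        else if (k : ℤ) + 1 = a then 1 else if (k : ℤ) = a then -1 else 0) (j : ℕ) := fun j => by
    simp only [DnBasisMatrix, Matrix.of_apply, Fin.ext_iff]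
    norm_cast
  have hA := sum_intDelta_sub_mul n
    (fun a => reflectedUnit n a (k : ℕ) + reflectedUnit n (a + 1) (k : ℕ))
  simp only [Matrix.mul_apply, hD, lowerDiff, upperSum, adjacentSum, Matrix.of_apply, sub_mul,
    add_mul, Finset.sum_sub_distrib, Finset.sum_add_distrib]
  rw [hA, hA, sum_intDelta_sub_mul n (fun a : ℤ => if a = 0 then (if (k : ℤ) ≤ 1 then -1 else 0)
        else if (k : ℤ) + 1 = a then 1 else if (k : ℤ) = a then -1 else 0)]
  have hR : ∀ a : ℤ, 0 ≤ a → a < n → reflectedUnit n a k = intDelta (a - k) :=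
    fun a h0 h1 => reflectedUnit_of_lt h0 h1 (by omega) (by omega)
  rcases Nat.eq_zero_or_pos i with rfl | hi0
  · simp only [if_true, zero_mul, Finset.sum_const_zero, Nat.cast_zero, zero_add, zero_sub]
    rw [hR 0 (by omega) (by omega), hR 1 (by omega) (by omega), if_neg (by omega),
      if_pos (by omega), if_pos (by omega)]
    unfold intDelta
    split_ifs <;> omega
  · simp only [if_neg hi0.ne']
    rw [sum_intDelta_sub_mul n (fun a : ℤ => if a = 0 then (if (k : ℤ) ≤ 1 then -1 else 0)
        else if (k : ℤ) + 1 = a then 1 else if (k : ℤ) = a then -1 else 0)]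
    have h0 : (0 : ℤ) ≤ i - 1 ∧ (i : ℤ) - 1 < n := by omega
    have h1 : (0 : ℤ) ≤ i ∧ (i : ℤ) < n := by omega
    have h2 : ¬ (i : ℤ) = 0 := by omega
    have h3 : ¬ (i : ℤ) + 1 = 0 := by omega
    simp only [sub_add_cancel, if_pos h0, if_pos h1, if_neg h2, if_neg h3]
    rw [hR (i - 1) (by omega) (by omega), hR i (by omega) (by omega)]
    by_cases hin : i + 1 < n
    · have h4 : (0 : ℤ) ≤ i + 1 ∧ (i : ℤ) + 1 < n := by omega
      rw [hR (i + 1) (by omega) (by omega), if_pos h4]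
      unfold intDelta
      split_ifs <;> omega
    · have h4 : ¬ ((0 : ℤ) ≤ i + 1 ∧ (i : ℤ) + 1 < n) := by omega
      rw [if_neg h4, show (i : ℤ) + 1 = n by omega, reflectedUnit_self (by omega) (by omega)]
      unfold intDelta
      split_ifs <;> omega

/-- The vectors `(2 + c₁) eᵢ` form a basis of the lattice spanned by the rows of
`DnBasisMatrix n`. -/
theorem exists_isUnit_det_mul_DnBasisMatrix {n : ℕ} (hn : 8 ≤ n) :
    ∃ U : Matrix (Fin n) (Fin n) ℤ, IsUnit U.det ∧
      ∀ i k : Fin n, (U * DnBasisMatrix n) i k = basisCoord n (i : ℕ) (k : ℕ) := by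
  have hQ := isUnit_det_lowerDiff n
  refine ⟨secondLowerDiff n * (lowerDiff n)⁻¹ * upperSum n, ?_, fun i k => ?_⟩
  · rw [Matrix.det_mul, Matrix.det_mul]
    exact ((isUnit_det_secondLowerDiff n).mul (Matrix.isUnit_nonsing_inv_det _ hQ)).mul
      (isUnit_det_upperSum n)
  · rw [Matrix.mul_assoc, ← lowerDiff_mul_adjacentSum hn, Matrix.mul_assoc,
      ← Matrix.mul_assoc _ (lowerDiff n), Matrix.nonsing_inv_mul _ hQ, Matrix.one_mul,
      secondLowerDiff_mul_adjacentSum]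

section Trace

variable {r : ℕ}

theorem exists_modEq_add_half {k : ℕ} (hk : ¬ 2 ^ (r + 1) ∣ k) :
    ∃ u : ℕ, u.Coprime (2 ^ (r + 2)) ∧ u * k ≡ k + 2 ^ (r + 1) [MOD 2 ^ (r + 2)] := by
  have hk0 : k ≠ 0 := by rintro rfl; exact hk (dvd_zero _)
  obtain ⟨a, m, hm, rfl⟩ := Nat.exists_eq_two_pow_mul_odd hk0
  have ha : a ≤ r := by
    by_contra! h
    exact hk ((pow_dvd_pow 2 h).mul_right m)
  obtain ⟨b, rfl⟩ := Nat.exists_eq_add_of_le ha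
  obtain ⟨c, rfl⟩ := hm
  refine ⟨1 + 2 ^ (b + 1), ?_, ?_⟩
  · refine Nat.Coprime.pow_right _ ?_
    exact Nat.coprime_two_right.mpr ⟨2 ^ b, by ring⟩
  · have : (1 + 2 ^ (b + 1)) * (2 ^ a * (2 * c + 1)) =
        2 ^ a * (2 * c + 1) + 2 ^ (a + b + 1) + 2 ^ (a + b + 2) * c := by ring
    rw [this]
    simp [Nat.ModEq]

theorem trace_pow_eq_zero {L : Type*} [Field L] [CharZero L] [Algebra ℚ L]
    [IsCyclotomicExtension {2 ^ (r + 2)} ℚ L] {ζ : L} (hζ : IsPrimitiveRoot ζ (2 ^ (r + 2)))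
    {k : ℕ} (hk : ¬ 2 ^ (r + 1) ∣ k) : Algebra.trace ℚ L (ζ ^ k) = 0 := by
  obtain ⟨u, hu, huk⟩ := exists_modEq_add_half hk
  have hμ := hζ.pow_of_coprime u hu
  have hmin : minpoly ℚ (hζ.powerBasis ℚ).gen = minpoly ℚ (hμ.powerBasis ℚ).gen := by
    have hirr := Polynomial.cyclotomic.irreducible_rat (n := 2 ^ (r + 2)) (by positivity)
    rw [hζ.powerBasis_gen ℚ, hμ.powerBasis_gen ℚ, ← hζ.minpoly_eq_cyclotomic_of_irreducible hirr,
      ← hμ.minpoly_eq_cyclotomic_of_irreducible hirr]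
  let σ := (hζ.powerBasis ℚ).equivOfMinpoly (hμ.powerBasis ℚ) hmin
  have hσ : σ ζ = ζ ^ u := by
    have := (hζ.powerBasis ℚ).equivOfMinpoly_gen (hμ.powerBasis ℚ) hmin
    rwa [hζ.powerBasis_gen ℚ, hμ.powerBasis_gen ℚ] at this
  have hhalf : ζ ^ 2 ^ (r + 1) = -1 :=
    IsPrimitiveRoot.eq_neg_one_of_two_right
      (hζ.pow (by positivity) (by ring))
  have hneg : σ (ζ ^ k) = -ζ ^ k := by
    rw [map_pow, hσ, ← pow_mul, pow_eq_pow_of_modEq huk hζ.pow_eq_one, pow_add, hhalf]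
    ring
  have := Algebra.trace_eq_of_algEquiv σ (ζ ^ k)
  rw [hneg, map_neg] at this
  linarith

open IntermediateField

theorem adjoin_primitiveRoot_isCyclotomicExtension {ζ : ℂ} (hζ : IsPrimitiveRoot ζ (2 ^ (r + 2))) :
    IsCyclotomicExtension {2 ^ (r + 2)} ℚ ℚ⟮ζ + ζ⁻¹⟯⟮ζ⟯ := by
  have h : ℚ⟮ζ + ζ⁻¹⟯⟮ζ⟯.restrictScalars ℚ = ℚ⟮ζ⟯ := by
    refine (restrictScalars_adjoin_eq_sup ℚ _ _).trans ?_
    rw [sup_eq_right, adjoin_simple_le_iff]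
    have := mem_adjoin_simple_self ℚ ζ
    exact add_mem this (inv_mem this)
  have hL : IsCyclotomicExtension {2 ^ (r + 2)} ℚ ℚ⟮ζ⟯ := by
    change IsCyclotomicExtension _ ℚ ℚ⟮ζ⟯.toSubalgebra
    rw [adjoin_simple_toSubalgebra_of_isAlgebraic
      (hζ.isIntegral (by positivity)).tower_top.isAlgebraic]
    exact hζ.adjoin_isCyclotomicExtension ℚ
  rw [← h] at hL
  exact hL

theorem finrank_adjoin_primitiveRoot_eq_two {ζ : ℂ} (hζ : IsPrimitiveRoot ζ (2 ^ (r + 2))) :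
    Module.finrank ℚ⟮ζ + ζ⁻¹⟯ ℚ⟮ζ + ζ⁻¹⟯⟮ζ⟯ = 2 := by
  have hζ0 : ζ ≠ 0 := hζ.ne_zero (by positivity)
  set K := ℚ⟮ζ + ζ⁻¹⟯ with hK
  let c : K := ⟨ζ + ζ⁻¹, mem_adjoin_simple_self ℚ _⟩
  let p : Polynomial K := Polynomial.X ^ 2 - Polynomial.C c * Polynomial.X + 1
  have hpdeg : p.natDegree = 2 := by simp only [p]; compute_degree!
  have hpm : p.Monic := by simp only [p]; monicity!
  have hp : Polynomial.aeval ζ p = 0 := by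
    have : algebraMap K ℂ c = ζ + ζ⁻¹ := rfl
    simp only [p, map_add, map_sub, map_mul, map_pow, Polynomial.aeval_X, Polynomial.aeval_C,
      map_one, this]
    field_simp
    ring
  have hint : IsIntegral K ζ := ⟨p, hpm, hp⟩
  rw [adjoin.finrank hint]
  apply le_antisymm
  · rw [← hpdeg]
    exact Polynomial.natDegree_le_of_dvd (minpoly.dvd K ζ hp) hpm.ne_zero
  · rw [minpoly.two_le_natDegree_iff hint]
    rintro ⟨x, hx⟩
    have hconj : starRingEnd ℂ ζ = ζ⁻¹ := by
      rw [Complex.inv_eq_conj (hζ.norm'_eq_one (by positivity))]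
    have hreal : ∀ y ∈ K, starRingEnd ℂ y = y := by
      intro y hy
      have hle : K ≤ ((Algebra.ofId ℝ ℂ).restrictScalars ℚ).fieldRange := by
        rw [hK, adjoin_simple_le_iff, ← hconj, Complex.add_conj]
        exact ⟨_, rfl⟩
      obtain ⟨x, rfl⟩ := hle hy
      exact Complex.conj_ofReal x
    have h1 : ζ⁻¹ = ζ := hconj ▸ hreal ζ (hx ▸ x.2)
    have h2 : ζ ^ 2 = 1 := by
      rw [pow_two]; nth_rewrite 1 [← h1]; exact inv_mul_cancel₀ hζ0
    have := Nat.le_of_dvd two_pos (hζ.dvd_of_pow_eq_one 2 h2)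
    have : 2 ^ 2 ≤ 2 ^ (r + 2) := Nat.pow_le_pow_right two_pos (by omega)
    omega


theorem trace_adjoin_eq {ζ : ℂ} (hζ : IsPrimitiveRoot ζ (2 ^ (r + 2))) {x : ℚ⟮ζ + ζ⁻¹⟯} {k l : ℕ}
    (hk : ¬ 2 ^ (r + 1) ∣ k) (hl : ¬ 2 ^ (r + 1) ∣ l) (hx : (x : ℂ) = ζ ^ k + ζ ^ l) :
    Algebra.trace ℚ ℚ⟮ζ + ζ⁻¹⟯ x = 0 := by
  have hfin := finrank_adjoin_primitiveRoot_eq_two hζ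
  have hL := adjoin_primitiveRoot_isCyclotomicExtension hζ
  have : FiniteDimensional ℚ⟮ζ + ζ⁻¹⟯ ℚ⟮ζ + ζ⁻¹⟯⟮ζ⟯ := .of_finrank_pos (by rw [hfin]; exact two_pos)
  have : FiniteDimensional ℚ ℚ⟮ζ + ζ⁻¹⟯⟮ζ⟯ := IsCyclotomicExtension.finiteDimensional {2 ^ (r + 2)} ℚ _
  have : FiniteDimensional ℚ ℚ⟮ζ + ζ⁻¹⟯ := .left ℚ ℚ⟮ζ + ζ⁻¹⟯ ℚ⟮ζ + ζ⁻¹⟯⟮ζ⟯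
  let z : ℚ⟮ζ + ζ⁻¹⟯⟮ζ⟯ := ⟨ζ, mem_adjoin_simple_self ℚ⟮ζ + ζ⁻¹⟯ ζ⟩
  have hz : IsPrimitiveRoot z (2 ^ (r + 2)) := IsPrimitiveRoot.coe_submonoidClass_iff.mp hζ
  have hxz : algebraMap ℚ⟮ζ + ζ⁻¹⟯ ℚ⟮ζ + ζ⁻¹⟯⟮ζ⟯ x = z ^ k + z ^ l := Subtype.ext hx
  have h := Algebra.trace_trace (R := ℚ) (S := ℚ⟮ζ + ζ⁻¹⟯) (algebraMap ℚ⟮ζ + ζ⁻¹⟯ ℚ⟮ζ + ζ⁻¹⟯⟮ζ⟯ x)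
  rw [Algebra.trace_algebraMap, hfin, hxz, map_add, trace_pow_eq_zero hz hk,
    trace_pow_eq_zero hz hl, map_nsmul] at h
  simpa using h

theorem finrank_adjoin_add_inv {ζ : ℂ} (hζ : IsPrimitiveRoot ζ (2 ^ (r + 2))) :
    Module.finrank ℚ ℚ⟮ζ + ζ⁻¹⟯ = 2 ^ r := by
  have hfin := finrank_adjoin_primitiveRoot_eq_two hζ
  have hL := adjoin_primitiveRoot_isCyclotomicExtension hζ
  have h := Module.finrank_mul_finrank ℚ ℚ⟮ζ + ζ⁻¹⟯ ℚ⟮ζ + ζ⁻¹⟯⟮ζ⟯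
  rw [hfin, IsCyclotomicExtension.finrank (n := 2 ^ (r + 2)) ℚ⟮ζ + ζ⁻¹⟯⟮ζ⟯
    (Polynomial.cyclotomic.irreducible_rat (by positivity)),
    Nat.totient_prime_pow_succ Nat.prime_two] at h
  simp only [Nat.add_one_sub_one] at h
  omega

theorem trace_of_coe_eq_zpow {ζ : ℂ} (hζ : IsPrimitiveRoot ζ (2 ^ (r + 2))) {x : ℚ⟮ζ + ζ⁻¹⟯}
    {m : ℤ} (hm : |m| < 2 ^ (r + 2)) (hx : (x : ℂ) = ζ ^ m + ζ ^ (-m)) :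
    Algebra.trace ℚ ℚ⟮ζ + ζ⁻¹⟯ x = 2 ^ (r + 1) * normalizedTrace (2 ^ r) m := by
  wlog h0 : 0 ≤ m generalizing m
  · rw [this (m := -m) (by rwa [abs_neg]) (by rw [hx, neg_neg, add_comm]) (by omega)]
    unfold normalizedTrace intDelta
    congr 2
    split_ifs <;> omega
  have hpow : (2 : ℤ) ^ (r + 2) = 4 * 2 ^ r := by ring
  have hpow' : 2 ^ (r + 2) = 2 * 2 ^ (r + 1) := by ring
  have hpow'' : 2 ^ (r + 1) = 2 * 2 ^ r := by ring
  rw [abs_of_nonneg h0, hpow] at hm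
  obtain ⟨k, rfl⟩ := Int.eq_ofNat_of_zero_le h0
  have hk : k < 4 * 2 ^ r := by exact_mod_cast hm
  rcases Nat.eq_zero_or_pos k with rfl | hk0
  · have hx2 : x = algebraMap ℚ _ 2 := Subtype.ext (by rw [hx]; norm_num; rfl)
    rw [hx2, Algebra.trace_algebraMap, finrank_adjoin_add_inv hζ,
      normalizedTrace_of_abs_lt (by push_cast; omega) (by push_cast; omega)]
    simp [intDelta, pow_succ]
  by_cases hk2 : k = 2 ^ (r + 1)
  · have hhalf : ζ ^ 2 ^ (r + 1) = -1 :=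
      IsPrimitiveRoot.eq_neg_one_of_two_right (hζ.pow (by positivity) (by ring))
    have hx2 : x = algebraMap ℚ _ (-2) := Subtype.ext (by
      change _ = algebraMap ℚ ℂ (-2)
      rw [hx, hk2, _root_.zpow_neg, zpow_natCast, hhalf]
      norm_num)
    rw [hx2, Algebra.trace_algebraMap, finrank_adjoin_add_inv hζ,
      normalizedTrace_of_nonneg (by push_cast; omega), hk2,
      intDelta_eq_zero (by positivity)]
    simp [intDelta, pow_succ, mul_comm]
  · have hdvd : ∀ l : ℕ, 0 < l → l < 4 * 2 ^ r → l ≠ 2 ^ (r + 1) → ¬ 2 ^ (r + 1) ∣ l := by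
      rintro l hl hl' hl2 ⟨t, rfl⟩
      have : t < 2 := by
        by_contra! ht
        have := Nat.mul_le_mul_left (2 ^ (r + 1)) ht
        omega
      interval_cases t <;> omega
    rw [trace_adjoin_eq hζ (hdvd k hk0 hk hk2)
      (hdvd (2 ^ (r + 2) - k) (by omega) (by omega) (by omega)),
      normalizedTrace_of_nonneg (by push_cast; omega), intDelta_eq_zero (by omega),
      intDelta_eq_zero (by zify at hk2 hpow''; push_cast; omega)]
    · simp
    · rw [hx, zpow_natCast, _root_.zpow_neg, zpow_natCast, 
        pow_sub₀ _ (hζ.ne_zero (by positivity)) (by omega), hζ.pow_eq_one, one_mul]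

end Trace

/-- With `K = ℚ(ζ + ζ⁻¹)` for `ζ` a primitive `2^r`-th root of
unity (`r ≥ 5`), `n = 2^{r-2}`, `e₀ = 1`, `eᵢ = ζ^i + ζ^{-i}`,
`α = 4 + e₁ - 2e₂ - e₃`, the matrix `G` with entries
`G_{ij} = Tr(α e_{i-1} e_{j-1}) / 2^{r-1}` satisfies `G = U · (B Bᵀ) · Uᵀ` for some
unimodular integer matrix `U`, i.e. the lattice `(1/√(2^{r-1}))·σ_α(O_K)` is a
rotated copy of `Dₙ`. -/
theorem gram_matrix_is_rotated_Dn
    (r n : ℕ) (hr : 5 ≤ r) (hn : n = 2 ^ (r - 2))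
    (ζ : ℂ) (hζ : IsPrimitiveRoot ζ (2 ^ r))
    (e : ℕ → ℚ⟮ζ + ζ⁻¹⟯) (he0 : e 0 = 1)
    (he : ∀ i : ℕ, 1 ≤ i → ((e i : ℂ) = ζ ^ i + ζ⁻¹ ^ i))
    (α : ℚ⟮ζ + ζ⁻¹⟯) (hα : α = 4 + e 1 - 2 * e 2 - e 3)
    (G : Matrix (Fin n) (Fin n) ℚ)
    (hG : ∀ i j : Fin n,
      G i j = Algebra.trace ℚ ℚ⟮ζ + ζ⁻¹⟯ (α * e (i : ℕ) * e (j : ℕ)) / 2 ^ (r - 1)) :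
    ∃ U : Matrix (Fin n) (Fin n) ℤ, IsUnit U.det ∧
      G = (U.map (Int.cast : ℤ → ℚ)) *
            ((DnBasisMatrix n * (DnBasisMatrix n)ᵀ).map (Int.cast : ℤ → ℚ)) *
            (U.map (Int.cast : ℤ → ℚ))ᵀ := by
  obtain ⟨r, rfl⟩ := Nat.exists_eq_add_of_le' (show 2 ≤ r by omega)
  simp only [Nat.add_sub_cancel] at hn
  have hr1 : r + 2 - 1 = r + 1 := rfl
  rw [hr1] at hG
  have hn8 : 8 ≤ n := hn ▸ Nat.pow_le_pow_right two_pos (by omega : 3 ≤ r)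
  have hζ0 : ζ ≠ 0 := hζ.ne_zero (by positivity)
  obtain ⟨c, hc⟩ : ∃ c : ℤ → ℚ⟮ζ + ζ⁻¹⟯, ∀ m, (c m : ℂ) = ζ ^ m + ζ ^ (-m) := by
    refine ⟨fun m => if m = 0 then 2 else e m.natAbs, fun m => ?_⟩
    rcases eq_or_ne m 0 with rfl | hm
    · norm_num
      rfl
    · simp only [if_neg hm]
      rw [he _ (by omega)]
      have h := Int.natAbs_eq m
      generalize m.natAbs = k at h ⊢
      rcases h with rfl | rfl <;> simp [add_comm]
  have hc_mul : ∀ a b, c a * c b = c (a + b) + c (a - b) := fun a b => Subtype.ext <| by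
    simp only [MulMemClass.coe_mul, AddMemClass.coe_add, hc, neg_add, sub_eq_add_neg,
      zpow_add₀ hζ0, neg_neg]
    ring
  have hec : ∀ i : ℕ, (if i = 0 then 2 else 1) * e i = c i := fun i => Subtype.ext <| by
    rcases Nat.eq_zero_or_pos i with rfl | hi
    · rw [hc, if_pos rfl, he0]; norm_num; rfl
    · rw [hc, if_neg hi.ne', one_mul, he i hi]; simp
  have hαc : ∀ m, α * c m = 4 * c m + (c (m + 1) + c (m - 1)) - 2 * (c (m + 2) + c (m - 2))
      - (c (m + 3) + c (m - 3)) := fun m => by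
    have h (i : ℕ) (hi : i ≠ 0) : e i = c i := by simpa [hi] using hec i
    rw [hα, h 1 one_ne_zero, h 2 two_ne_zero, h 3 three_ne_zero]
    have h1 := hc_mul m 1
    have h2 := hc_mul m 2
    have h3 := hc_mul m 3
    push_cast
    linear_combination h1 - 2 * h2 - h3
  have htr : ∀ m : ℤ, |m| < 4 * n → Algebra.trace ℚ ℚ⟮ζ + ζ⁻¹⟯ (c m) =
      2 ^ (r + 1) * normalizedTrace n m := fun m hm => by
    rw [trace_of_coe_eq_zpow hζ (lt_of_lt_of_eq hm (by rw [hn]; push_cast; ring)) (hc m), hn]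
  have htrα : ∀ m : ℤ, |m| < 4 * n - 3 → Algebra.trace ℚ ℚ⟮ζ + ζ⁻¹⟯ (α * c m) =
      2 ^ (r + 1) * twistedTrace n m := fun m hm => by
    rw [abs_lt] at hm
    have h4 : 4 * c m = (4 : ℚ) • c m := by rw [Algebra.smul_def]; norm_num
    have h2 (x : ℚ⟮ζ + ζ⁻¹⟯) : 2 * x = (2 : ℚ) • x := by rw [Algebra.smul_def]; norm_num
    rw [hαc, h4, h2]
    simp only [map_add, map_sub, map_smul]
    iterate 7 rw [htr _ (abs_lt.mpr ⟨by omega, by omega⟩)]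
    simp only [twistedTrace, smul_eq_mul]
    push_cast
    ring
  obtain ⟨U, hU, hUB⟩ := exists_isUnit_det_mul_DnBasisMatrix hn8
  have hgram : ∀ i j : Fin n, G i j =
      ((∑ k : Fin n, basisCoord n (i : ℕ) (k : ℕ) * basisCoord n (j : ℕ) (k : ℕ) : ℤ) : ℚ) :=
    fun i j => by
    set s : ℕ → ℤ := fun i => if i = 0 then 2 else 1 with hs
    have hs0 : ∀ i, (s i : ℚ) ≠ 0 := fun i => by simp only [hs]; split_ifs <;> norm_num
    have hsum := sum_rotatedCoord_mul hn8 i j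
    simp only [rotatedCoord_eq hn8, mul_mul_mul_comm _ (basisCoord _ _ _), ← Finset.mul_sum] at hsum
    have hi := i.2
    have hj := j.2
    have htrace : (s i * s j : ℚ) * Algebra.trace ℚ ℚ⟮ζ + ζ⁻¹⟯ (α * e i * e j) =
        2 ^ (r + 1) * (twistedTrace n ((i : ℕ) + (j : ℕ)) + twistedTrace n ((i : ℕ) - (j : ℕ))) := by
      rw [mul_add, ← htrα _ (abs_lt.mpr ⟨by omega, by omega⟩),
        ← htrα _ (abs_lt.mpr ⟨by omega, by omega⟩), ← map_add, ← mul_add, ← hc_mul, ← hec, ← hec,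
        ← smul_eq_mul, ← map_smul, Algebra.smul_def]
      congr 1
      simp only [hs]
      split_ifs <;> push_cast <;> simp <;> ring
    rw [hG, div_eq_iff (by positivity)]
    refine mul_left_cancel₀ (mul_ne_zero (hs0 i) (hs0 j)) (htrace.trans ?_)
    rw [← Int.cast_add, ← hsum]
    simp only [hs]
    push_cast
    ring
  refine ⟨U, hU, ?_⟩
  have hfactor : U.map (Int.cast : ℤ → ℚ) *
      (DnBasisMatrix n * (DnBasisMatrix n)ᵀ).map (Int.cast : ℤ → ℚ) *
      (U.map (Int.cast : ℤ → ℚ))ᵀ =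
      ((U * DnBasisMatrix n) * (U * DnBasisMatrix n)ᵀ).map (Int.castRingHom ℚ) := by
    rw [Matrix.transpose_mul, Matrix.mul_assoc U, ← Matrix.mul_assoc (DnBasisMatrix n),
      ← Matrix.mul_assoc U, Matrix.map_mul, Matrix.map_mul, Matrix.transpose_map]
    rfl
  rw [hfactor]
  ext i j
  rw [hgram, Matrix.map_apply, Matrix.mul_apply]
  simp only [Matrix.transpose_apply, hUB]
  rfl
end

section
/- With K = ℚ(ζ + ζ^{-1}) for ζ a primitive 2^r-th root of unity (r ≥ 5), n = 2^{r-2}, e_0 = 1, e_i = ζ^i + ζ^{-i}, and α' = 2 + e_1, define g_k = Σ_{j=0}^{n-k} (-1)^j e_j for 1 ≤ k ≤ n. Then g_1, …, g_n is a ℤ-basis of O_K = ℤ[ζ + ζ^{-1}] and Tr_{K/ℚ}(α' g_k g_l) = 2^{r-1} if k = l, and Tr_{K/ℚ}(α' g_k g_l) = 0 if k ≠ l. Equivalently, the lattice (1/√(2^{r-1}))·σ_{α'}(O_K) is a rotated (isometric) copy of ℤ^n. -/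
open scoped IntermediateField

/-- If `x` and `y` are conjugate over `F`, then so are the values at `x` and `y` of a Laurent
polynomial `X ^ i + X ^ (-i)`. -/
theorem minpoly_pow_add_inv_pow_eq {F L : Type*} [Field F] [Field L] [Algebra F L] {x y : L}
    (hx : IsIntegral F x) (hxy : minpoly F x = minpoly F y) (i : ℕ) :
    minpoly F (x ^ i + x⁻¹ ^ i) = minpoly F (y ^ i + y⁻¹ ^ i) := by
  let pb := IntermediateField.adjoin.powerBasis hx
  have hroot : Polynomial.aeval y (minpoly F pb.gen) = 0 := by
    rw [IntermediateField.adjoin.powerBasis_gen, IntermediateField.minpoly_gen, hxy]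
    exact minpoly.aeval F y
  have hgen : algebraMap F⟮x⟯ L pb.gen = x := by
    rw [IntermediateField.adjoin.powerBasis_gen, IntermediateField.AdjoinSimple.algebraMap_gen]
  have hlift : pb.lift y hroot pb.gen = y := pb.lift_gen y hroot
  have h₁ := minpoly.algHom_eq (IsScalarTower.toAlgHom F F⟮x⟯ L)
    (algebraMap F⟮x⟯ L).injective (pb.gen ^ i + pb.gen⁻¹ ^ i)
  have h₂ := minpoly.algHom_eq (pb.lift y hroot)
    (pb.lift y hroot).toRingHom.injective (pb.gen ^ i + pb.gen⁻¹ ^ i)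
  simp only [map_add, map_pow, map_inv₀, hlift, IsScalarTower.coe_toAlgHom', hgen] at h₁ h₂
  rw [h₁, h₂]

theorem Algebra.trace_eq_zero_of_minpoly_neg {K : Type*} [Field K] [Algebra ℚ K]
    [FiniteDimensional ℚ K] {x : K} (h : minpoly ℚ x = minpoly ℚ (-x)) :
    Algebra.trace ℚ K x = 0 := by
  have h₁ := trace_eq_finrank_mul_minpoly_nextCoeff ℚ x
  have h₂ := trace_eq_finrank_mul_minpoly_nextCoeff ℚ (-x)
  have hd : Module.finrank ℚ⟮x⟯ K = Module.finrank ℚ⟮-x⟯ K := by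
    have e₁ := Module.finrank_mul_finrank ℚ ℚ⟮x⟯ K
    have e₂ := Module.finrank_mul_finrank ℚ ℚ⟮-x⟯ K
    rw [IntermediateField.adjoin.finrank (Algebra.IsIntegral.isIntegral _)] at e₁ e₂
    rw [← h, ← e₁] at e₂
    exact (Nat.eq_of_mul_eq_mul_left
      (minpoly.natDegree_pos (Algebra.IsIntegral.isIntegral x)) e₂).symm
  rw [← h, ← hd, ← h₁, map_neg] at h₂
  linarith

theorem IsPrimitiveRoot.pow_two_pow_pred_eq_neg_one {r : ℕ} (hr : 1 ≤ r) {ζ : ℂ}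
    (hζ : IsPrimitiveRoot ζ (2 ^ r)) : ζ ^ 2 ^ (r - 1) = -1 := by
  refine (hζ.pow (by positivity) ?_).eq_neg_one_of_two_right
  rw [← pow_succ]
  congr 1
  omega

/-- A Laurent polynomial `ζ ^ i + ζ ^ (-i)` is conjugate to its opposite, unless it is `± 2`. -/
theorem minpoly_pow_add_inv_pow_eq_neg {r : ℕ} (hr : 1 ≤ r) {ζ : ℂ}
    (hζ : IsPrimitiveRoot ζ (2 ^ r)) {i : ℕ} (hi : 0 < i) (hi' : i < 2 ^ (r - 1)) :
    minpoly ℚ (ζ ^ i + ζ⁻¹ ^ i) = minpoly ℚ (-(ζ ^ i + ζ⁻¹ ^ i)) := by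
  obtain ⟨a, b, hb, rfl⟩ := Nat.exists_eq_two_pow_mul_odd hi.ne'
  have ha : a < r - 1 := (Nat.pow_lt_pow_iff_right one_lt_two).1
    ((Nat.le_mul_of_pos_right _ hb.pos).trans_lt hi')
  have hcop : (1 + 2 ^ (r - 1 - a)).Coprime (2 ^ r) := by
    refine Nat.Coprime.pow_right _ (Nat.coprime_two_right.2 ?_)
    exact odd_one.add_even ((Nat.even_pow.2 ⟨even_two, by omega⟩))
  have key : (ζ ^ (1 + 2 ^ (r - 1 - a))) ^ (2 ^ a * b) = -ζ ^ (2 ^ a * b) := by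
    have hexp : (1 + 2 ^ (r - 1 - a)) * (2 ^ a * b) = 2 ^ a * b + 2 ^ (r - 1) * b := by
      have : 2 ^ (r - 1) = 2 ^ (r - 1 - a) * 2 ^ a := by
        rw [← pow_add]
        congr 1
        omega
      rw [this]
      ring
    rw [← pow_mul, hexp, pow_add, pow_mul ζ (2 ^ (r - 1)), hζ.pow_two_pow_pred_eq_neg_one hr,
      hb.neg_one_pow]
    ring
  have hN : 0 < 2 ^ r := by positivity
  have hconj : minpoly ℚ ζ = minpoly ℚ (ζ ^ (1 + 2 ^ (r - 1 - a))) := by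
    rw [← Polynomial.cyclotomic_eq_minpoly_rat hζ hN,
      ← Polynomial.cyclotomic_eq_minpoly_rat (hζ.pow_of_coprime _ hcop) hN]
  rw [minpoly_pow_add_inv_pow_eq (hζ.isIntegral hN).tower_top hconj, inv_pow, key, inv_pow,
    inv_neg]
  congr 1
  ring

theorem one_sub_mul_sum_eq {F : Type*} [Field F] {η : F} (hη : η ≠ 0) {E : ℕ → F}
    (hE₀ : E 0 = 1) (hE : ∀ j, 1 ≤ j → E j = η ^ j + η⁻¹ ^ j) (m : ℕ) :
    (1 - η) * ∑ j ∈ Finset.range (m + 1), E j = η⁻¹ ^ m - η ^ (m + 1) := by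
  induction m with
  | zero => simp [hE₀]
  | succ m ih =>
    rw [Finset.sum_range_succ, mul_add, ih, hE _ (by omega)]
    have : η * η⁻¹ ^ (m + 1) = η⁻¹ ^ m := by
      rw [pow_succ', ← mul_assoc, mul_inv_cancel₀ hη, one_mul]
    linear_combination -this

/-- The alternating partial sums of the family `e` (up to a sign change of the variable, this is
the Dirichlet kernel). -/
def altSum {A : Type*} [CommRing A] (e : ℕ → A) (m : ℕ) : A :=
  ∑ j ∈ Finset.range m, (-1) ^ j * e j

section altSum

variable {A : Type*} [CommRing A] {e : ℕ → A}

theorem altSum_succ (m : ℕ) : altSum e (m + 1) = altSum e m + (-1) ^ m * e m :=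
  Finset.sum_range_succ _ _

theorem altSum_one (he₀ : e 0 = 1) : altSum e 1 = 1 := by
  simp [altSum, he₀]

theorem mul_altSum_one (he₀ : e 0 = 1) : e 1 * altSum e 1 = altSum e 1 - altSum e 2 := by
  rw [altSum_succ 1, altSum_one he₀]
  ring

theorem mul_altSum_add_two (he₀ : e 0 = 1) (he₂ : e 2 = e 1 * e 1 - 2)
    (he : ∀ j, e (j + 3) = e 1 * e (j + 2) - e (j + 1)) (m : ℕ) :
    e 1 * altSum e (m + 2) = -(altSum e (m + 3) + altSum e (m + 1)) := by
  induction m with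
  | zero =>
    simp only [zero_add, altSum_succ 2, altSum_succ 1, altSum_one he₀, he₂]
    ring
  | succ m ih =>
    rw [altSum_succ (m + 2), mul_add, ih, altSum_succ (m + 3), altSum_succ (m + 2),
      altSum_succ (m + 1), he m]
    ring

theorem mem_adjoin_singleton_of_recurrence (R : Type*) [CommRing R] [Algebra R A] (he₀ : e 0 = 1)
    (he₂ : e 2 = e 1 * e 1 - 2) (he : ∀ j, e (j + 3) = e 1 * e (j + 2) - e (j + 1)) (j : ℕ) :
    e j ∈ Algebra.adjoin R {e 1} := by
  have h₁ : e 1 ∈ Algebra.adjoin R {e 1} := Algebra.self_mem_adjoin_singleton R (e 1)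
  induction j using Nat.strong_induction_on with
  | _ j ih =>
    match j, ih with
    | 0, _ => exact he₀ ▸ one_mem _
    | 1, _ => exact h₁
    | 2, _ => exact he₂ ▸ sub_mem (mul_mem h₁ h₁) (ofNat_mem _ 2)
    | j + 3, ih =>
      exact he j ▸ sub_mem (mul_mem h₁ (ih (j + 2) (by omega))) (ih (j + 1) (by omega))

theorem adjoin_singleton_toSubmodule_le {R : Type*} [CommRing R] [Algebra R A] {x : A}
    {M : Submodule R A} (h₁ : 1 ∈ M) (hx : ∀ y ∈ M, x * y ∈ M) :
    Subalgebra.toSubmodule (Algebra.adjoin R {x}) ≤ M := by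
  have hpow (k : ℕ) : x ^ k ∈ M := by
    induction k with
    | zero => simpa using h₁
    | succ k ih => exact pow_succ' x k ▸ hx _ ih
  intro y hy
  rw [Subalgebra.mem_toSubmodule, Algebra.adjoin_singleton_eq_range_aeval] at hy
  obtain ⟨p, rfl⟩ := hy
  change Polynomial.aeval x p ∈ M
  rw [Polynomial.aeval_eq_sum_range]
  exact sum_mem fun k _ ↦ M.smul_mem _ (hpow k)

theorem span_altSum_eq_adjoin (R : Type*) [CommRing R] [Algebra R A] (he₀ : e 0 = 1)
    (he₂ : e 2 = e 1 * e 1 - 2) (he : ∀ j, e (j + 3) = e 1 * e (j + 2) - e (j + 1))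
    {n : ℕ} (hn : 2 ≤ n) (hen : e n = 0) :
    Submodule.span R (Set.range fun k : Fin n ↦ altSum e (n - k)) =
      Subalgebra.toSubmodule (Algebra.adjoin R {e 1}) := by
  set M := Submodule.span R (Set.range fun k : Fin n ↦ altSum e (n - k)) with hM
  have hmem (m : ℕ) (hm : m < n) : altSum e (m + 1) ∈ M := by
    refine Submodule.subset_span ⟨⟨n - (m + 1), by omega⟩, ?_⟩
    change altSum e (n - (n - (m + 1))) = _
    congr 1
    omega
  have hmem' (m : ℕ) (hm : m ≤ n) : altSum e (m + 1) ∈ M := by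
    obtain hm | rfl := hm.lt_or_eq
    · exact hmem m hm
    · rw [altSum_succ, hen, mul_zero, add_zero]
      obtain ⟨m, rfl⟩ := Nat.exists_eq_add_of_le' (one_le_two.trans hn)
      exact hmem m (by omega)
  apply le_antisymm
  · rw [hM, Submodule.span_le]
    rintro _ ⟨k, rfl⟩
    refine (Algebra.adjoin R {e 1}).sum_mem fun j _ ↦
      mul_mem (pow_mem (neg_mem (one_mem _)) _) ?_
    exact mem_adjoin_singleton_of_recurrence R he₀ he₂ he j
  · refine adjoin_singleton_toSubmodule_le (altSum_one he₀ ▸ hmem 0 (by omega)) fun y hy ↦ ?_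
    induction hy using Submodule.span_induction with
    | zero => simp
    | add x y _ _ hx hy => exact mul_add (e 1) x y ▸ add_mem hx hy
    | smul a x _ hx => exact mul_smul_comm a (e 1) x ▸ M.smul_mem a hx
    | mem x hx =>
      obtain ⟨k, rfl⟩ := hx
      obtain ⟨m, hm⟩ : ∃ m, n - (k : ℕ) = m + 1 := ⟨n - k - 1, by omega⟩
      simp only [hm]
      match m, hm with
      | 0, _ =>
        exact mul_altSum_one he₀ ▸ sub_mem (hmem' 0 (by omega)) (hmem' 1 (by omega))
      | m + 1, hm =>
        exact mul_altSum_add_two he₀ he₂ he m ▸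
          neg_mem (add_mem (hmem' (m + 2) (by omega)) (hmem' m (by omega)))

end altSum

section Laurent

variable {F : Type*} [Field F] {ζ : F} {e : ℕ → F}

theorem one_add_mul_altSum (hζ : ζ ≠ 0) (he₀ : e 0 = 1)
    (he : ∀ i, 1 ≤ i → e i = ζ ^ i + ζ⁻¹ ^ i) (m : ℕ) :
    (1 + ζ) * altSum e (m + 1) = (-ζ)⁻¹ ^ m - (-ζ) ^ (m + 1) := by
  rw [← one_sub_mul_sum_eq (neg_ne_zero.2 hζ) (E := fun j ↦ (-1) ^ j * e j) (by simp [he₀]),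
    sub_neg_eq_add]
  · rfl
  · intro j hj
    rw [he j hj, inv_neg, neg_pow ζ, neg_pow ζ⁻¹]
    ring

theorem one_add_inv_mul_altSum (hζ : ζ ≠ 0) (he₀ : e 0 = 1)
    (he : ∀ i, 1 ≤ i → e i = ζ ^ i + ζ⁻¹ ^ i) (m : ℕ) :
    (1 + ζ⁻¹) * altSum e (m + 1) = (-ζ) ^ m - (-ζ)⁻¹ ^ (m + 1) := by
  have := one_add_mul_altSum (inv_ne_zero hζ) he₀ (e := e)
    (fun i hi ↦ by rw [he i hi, inv_inv, add_comm]) m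
  rwa [inv_neg, inv_inv, ← inv_neg] at this

theorem two_add_mul_altSum_mul_altSum (hζ : ζ ≠ 0) (he₀ : e 0 = 1)
    (he : ∀ i, 1 ≤ i → e i = ζ ^ i + ζ⁻¹ ^ i) (m d : ℕ) :
    (2 + e 1) * altSum e (m + 1) * altSum e (m + d + 1) =
      (-1) ^ d * (ζ ^ d + ζ⁻¹ ^ d + e (2 * m + d + 1)) := by
  have hxy : ζ * ζ⁻¹ = 1 := mul_inv_cancel₀ hζ
  have huv : ζ ^ m * ζ⁻¹ ^ m = 1 := by rw [← mul_pow, hxy, one_pow]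
  have hs : (-1 : F) ^ m * (-1) ^ m = 1 := by rw [← mul_pow]; simp
  have h₁ : (1 + ζ) * altSum e (m + 1) = (-1) ^ m * (ζ⁻¹ ^ m + ζ ^ m * ζ) := by
    rw [one_add_mul_altSum hζ he₀ he m, inv_neg, neg_pow ζ, neg_pow ζ⁻¹]
    ring
  have h₂ : (1 + ζ⁻¹) * altSum e (m + d + 1) =
      (-1) ^ m * (-1) ^ d * (ζ ^ m * ζ ^ d + ζ⁻¹ ^ m * ζ⁻¹ ^ d * ζ⁻¹) := by
    rw [one_add_inv_mul_altSum hζ he₀ he (m + d), inv_neg, neg_pow ζ, neg_pow ζ⁻¹]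
    ring
  have hα : 2 + e 1 = (1 + ζ) * (1 + ζ⁻¹) := by
    rw [he 1 le_rfl]
    linear_combination -hxy
  have he' : e (2 * m + d + 1) =
      ζ ^ m * ζ ^ m * ζ ^ d * ζ + ζ⁻¹ ^ m * ζ⁻¹ ^ m * ζ⁻¹ ^ d * ζ⁻¹ := by
    rw [he _ (by omega)]
    ring
  calc (2 + e 1) * altSum e (m + 1) * altSum e (m + d + 1)
      = ((1 + ζ) * altSum e (m + 1)) * ((1 + ζ⁻¹) * altSum e (m + d + 1)) := by rw [hα]; ring
    _ = _ := by
      rw [h₁, h₂, he']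
      linear_combination
        (-1) ^ d * (ζ⁻¹ ^ m + ζ ^ m * ζ) * (ζ ^ m * ζ ^ d + ζ⁻¹ ^ m * ζ⁻¹ ^ d * ζ⁻¹) * hs +
        (-1) ^ d * (ζ ^ d + ζ⁻¹ ^ d * (ζ * ζ⁻¹)) * huv + (-1) ^ d * ζ⁻¹ ^ d * hxy

end Laurent

theorem trace_eq_zero_of_map_eq_pow_add_inv_pow {K : Type*} [Field K] [Algebra ℚ K]
    [FiniteDimensional ℚ K] (φ : K →ₐ[ℚ] ℂ) {r : ℕ} (hr : 1 ≤ r) {ζ : ℂ}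
    (hζ : IsPrimitiveRoot ζ (2 ^ r)) {i : ℕ} (hi : 0 < i) (hi' : i < 2 ^ (r - 1)) {x : K}
    (hx : φ x = ζ ^ i + ζ⁻¹ ^ i) : Algebra.trace ℚ K x = 0 := by
  apply Algebra.trace_eq_zero_of_minpoly_neg
  rw [← minpoly.algHom_eq φ φ.toRingHom.injective, ← minpoly.algHom_eq φ φ.toRingHom.injective,
    map_neg, hx]
  exact minpoly_pow_add_inv_pow_eq_neg hr hζ hi hi'

section RealCyclotomic

variable {K : Type*} [Field K] [Algebra ℚ K] (φ : K →ₐ[ℚ] ℂ) {r n : ℕ} {ζ : ℂ} {e : ℕ → K}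

theorem recurrence_two (hζ : ζ ≠ 0) (he : ∀ i : ℕ, 1 ≤ i → φ (e i) = ζ ^ i + ζ⁻¹ ^ i) :
    e 2 = e 1 * e 1 - 2 := by
  apply φ.toRingHom.injective
  have hxy : ζ * ζ⁻¹ = 1 := mul_inv_cancel₀ hζ
  change φ _ = φ _
  rw [map_sub, map_mul, he 1 le_rfl, he 2 (by omega), map_ofNat]
  linear_combination -2 * hxy

theorem recurrence_add_three (hζ : ζ ≠ 0)
    (he : ∀ i : ℕ, 1 ≤ i → φ (e i) = ζ ^ i + ζ⁻¹ ^ i) (j : ℕ) :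
    e (j + 3) = e 1 * e (j + 2) - e (j + 1) := by
  apply φ.toRingHom.injective
  have hxy : ζ * ζ⁻¹ = 1 := mul_inv_cancel₀ hζ
  change φ _ = φ _
  rw [map_sub, map_mul, he 1 le_rfl, he _ (by omega), he _ (by omega), he _ (by omega)]
  linear_combination (-ζ ^ (j + 1) - ζ⁻¹ ^ (j + 1)) * hxy

theorem apply_two_pow_eq_zero (hr : 2 ≤ r) (hn : n = 2 ^ (r - 2))
    (hζ : IsPrimitiveRoot ζ (2 ^ r)) (he : ∀ i : ℕ, 1 ≤ i → φ (e i) = ζ ^ i + ζ⁻¹ ^ i) :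
    e n = 0 := by
  apply φ.toRingHom.injective
  change φ _ = φ _
  have hζ₀ : ζ ≠ 0 := hζ.ne_zero (by positivity)
  have hsq : ζ ^ n * ζ ^ n = -1 := by
    rw [← hζ.pow_two_pow_pred_eq_neg_one (by omega), ← pow_add, hn, ← two_mul, ← pow_succ']
    congr 2
    omega
  rw [map_zero, he n (hn ▸ Nat.one_le_two_pow), inv_pow]
  have : ζ ^ n ≠ 0 := pow_ne_zero _ hζ₀
  field_simp
  linear_combination hsq

theorem trace_two_add_mul_altSum_mul_altSum [FiniteDimensional ℚ K] (hr : 2 ≤ r)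
    (hn : n = 2 ^ (r - 2)) (hζ : IsPrimitiveRoot ζ (2 ^ r)) (he₀ : e 0 = 1)
    (he : ∀ i : ℕ, 1 ≤ i → φ (e i) = ζ ^ i + ζ⁻¹ ^ i) (k l : Fin n) :
    Algebra.trace ℚ K ((2 + e 1) * altSum e (n - k) * altSum e (n - l)) =
      if k = l then 2 * (Module.finrank ℚ K : ℚ) else 0 := by
  wlog h : l ≤ k generalizing k l
  · rw [mul_right_comm, this l k (le_of_not_ge h)]
    simp only [eq_comm]
  obtain ⟨m, hm⟩ : ∃ m, n - (k : ℕ) = m + 1 := ⟨n - k - 1, by omega⟩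
  obtain ⟨d, hd⟩ : ∃ d, n - (l : ℕ) = m + d + 1 := ⟨k - l, by omega⟩
  have h2n : 2 ^ (r - 1) = 2 * n := by
    rw [hn, ← pow_succ']
    congr 1
    omega
  have htr (i : ℕ) (hi : 0 < i) (hi' : i < 2 * n) : Algebra.trace ℚ K (e i) = 0 :=
    trace_eq_zero_of_map_eq_pow_add_inv_pow φ (by omega) hζ hi (h2n ▸ hi') (he i hi)
  have hmap (j : ℕ) : φ (altSum e j) = altSum (fun i ↦ φ (e i)) j := by simp [altSum]
  have hprod := two_add_mul_altSum_mul_altSum (e := fun i ↦ φ (e i))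
    (hζ.ne_zero (by positivity)) (by simp [he₀]) he m d
  rw [← hmap, ← hmap] at hprod
  rw [hm, hd]
  obtain rfl | hd₀ := Nat.eq_zero_or_pos d
  · have hkl : k = l := by omega
    have : (2 + e 1) * altSum e (m + 1) * altSum e (m + 0 + 1) =
        algebraMap ℚ K 2 + e (2 * m + 1) := by
      apply φ.toRingHom.injective
      change φ _ = φ _
      rw [map_mul, map_mul, map_add, map_ofNat, hprod, map_add, φ.commutes, map_ofNat]
      norm_num
    rw [this, map_add, Algebra.trace_algebraMap, htr _ (by omega) (by omega), if_pos hkl,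
      nsmul_eq_mul]
    ring
  · have hkl : k ≠ l := by
      rintro rfl
      omega
    have : (2 + e 1) * altSum e (m + 1) * altSum e (m + d + 1) =
        ((-1) ^ d : ℚ) • (e d + e (2 * m + d + 1)) := by
      apply φ.toRingHom.injective
      change φ _ = φ _
      rw [map_mul, map_mul, map_add, map_ofNat, hprod, map_smul, map_add, he d hd₀,
        Algebra.smul_def]
      simp
    rw [this, map_smul, map_add, htr _ hd₀ (by omega), htr _ (by omega) (by omega), if_neg hkl]
    simp

/-- The rotated `ℤ ^ n` lattice in an abstract copy `K` of `ℚ(ζ + ζ⁻¹)`. -/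
theorem altSum_basis_and_trace (hr : 3 ≤ r) (hn : n = 2 ^ (r - 2))
    (hζ : IsPrimitiveRoot ζ (2 ^ r)) (he₀ : e 0 = 1)
    (he : ∀ i : ℕ, 1 ≤ i → φ (e i) = ζ ^ i + ζ⁻¹ ^ i) (htop : Algebra.adjoin ℚ {e 1} = ⊤) :
    LinearIndependent ℤ (fun k : Fin n ↦ altSum e (n - k)) ∧
    Submodule.span ℤ (Set.range fun k : Fin n ↦ altSum e (n - k)) =
      Subalgebra.toSubmodule (Algebra.adjoin ℤ {e 1}) ∧
    ∀ k l : Fin n, Algebra.trace ℚ K ((2 + e 1) * altSum e (n - k) * altSum e (n - l)) =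
      if k = l then 2 ^ (r - 1) else 0 := by
  have hζ₀ : ζ ≠ 0 := hζ.ne_zero (by positivity)
  have hn2 : 2 ≤ n := hn ▸ Nat.le_self_pow (by omega) 2
  have hen : e n = 0 := apply_two_pow_eq_zero φ (by omega) hn hζ he
  have hspan := span_altSum_eq_adjoin ℚ he₀ (recurrence_two φ hζ₀ he)
    (recurrence_add_three φ hζ₀ he) hn2 hen
  rw [htop, Algebra.top_toSubmodule] at hspan
  have : FiniteDimensional ℚ K :=
    Module.Finite.of_fg_top (hspan ▸ Submodule.fg_span (Set.finite_range _))
  have htr := trace_two_add_mul_altSum_mul_altSum φ (by omega) hn hζ he₀ he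
  have hli : LinearIndependent ℚ (fun k : Fin n ↦ altSum e (n - k)) := by
    refine LinearMap.BilinForm.linearIndependent_of_iIsOrtho
      (B := (Algebra.traceForm ℚ K).compLeft (LinearMap.mulLeft ℚ (2 + e 1)))
      (fun k l hkl ↦ ?_) fun k ↦ ?_
    · exact (htr k l).trans (if_neg hkl)
    · refine ((htr k k).trans (if_pos rfl)).trans_ne ?_
      have := Module.finrank_pos (R := ℚ) (M := K)
      positivity
  have hrank : Module.finrank ℚ K = n := by
    rw [Module.finrank_eq_card_basis (Module.Basis.mk hli hspan.ge), Fintype.card_fin]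
  refine ⟨hli.restrict_scalars' ℤ, span_altSum_eq_adjoin ℤ he₀
    (recurrence_two φ hζ₀ he) (recurrence_add_three φ hζ₀ he) hn2 hen, fun k l ↦ ?_⟩
  have hpow : (2 ^ (r - 1) : ℚ) = 2 * n := by
    rw [hn, Nat.cast_pow, Nat.cast_ofNat, ← pow_succ']
    congr 1
    omega
  rw [htr, hrank, hpow]

end RealCyclotomic


/-- With `K = ℚ(ζ + ζ⁻¹)` for `ζ` a primitive `2^r`-th root of unity
(`r ≥ 5`), `n = 2^{r-2}`, `α' = 2 + e₁` and `gₖ = Σ_{j=0}^{n-k} (-1)^j eⱼ`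
(`1 ≤ k ≤ n`, `0`-indexed below), the family `g` is a `ℤ`-basis of
`O_K = ℤ[ζ + ζ⁻¹]` and `Tr(α' gₖ gₗ) = 2^{r-1}` if `k = l` and `0` otherwise:
the lattice `(1/√(2^{r-1}))·σ_{α'}(O_K)` is a rotated copy of `ℤⁿ`. -/
theorem rotated_Zn_two_power
    (r n : ℕ) (hr : 5 ≤ r) (hn : n = 2 ^ (r - 2))
    (ζ : ℂ) (hζ : IsPrimitiveRoot ζ (2 ^ r))
    (ξ : ℚ⟮ζ + ζ⁻¹⟯) (hξ : (ξ : ℂ) = ζ + ζ⁻¹)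
    (e : ℕ → ℚ⟮ζ + ζ⁻¹⟯) (he0 : e 0 = 1)
    (he : ∀ i : ℕ, 1 ≤ i → ((e i : ℂ) = ζ ^ i + ζ⁻¹ ^ i))
    (α' : ℚ⟮ζ + ζ⁻¹⟯) (hα' : α' = 2 + e 1)
    (g : Fin n → ℚ⟮ζ + ζ⁻¹⟯)
    (hg : ∀ k : Fin n, g k =
      ∑ j ∈ Finset.range (n - (k : ℕ)), (-1 : ℚ⟮ζ + ζ⁻¹⟯) ^ j * e j) :
    LinearIndependent ℤ g ∧
    Submodule.span ℤ (Set.range g) =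
      Subalgebra.toSubmodule (Algebra.adjoin ℤ ({ξ} : Set ℚ⟮ζ + ζ⁻¹⟯)) ∧
    ∀ k l : Fin n, Algebra.trace ℚ ℚ⟮ζ + ζ⁻¹⟯ (α' * g k * g l) =
      if k = l then 2 ^ (r - 1) else 0 := by
  have he' : ∀ i : ℕ, 1 ≤ i →
      IsScalarTower.toAlgHom ℚ ℚ⟮ζ + ζ⁻¹⟯ ℂ (e i) = ζ ^ i + ζ⁻¹ ^ i := he
  obtain rfl : ξ = e 1 := Subtype.ext (by rw [hξ, he 1 le_rfl, pow_one, pow_one])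
  obtain rfl : g = fun k : Fin n ↦ altSum e (n - k) := funext hg
  have hint : IsIntegral ℚ (ζ + ζ⁻¹) :=
    ((hζ.isIntegral (by positivity)).add (hζ.inv.isIntegral (by positivity))).tower_top
  have htop : Algebra.adjoin ℚ {e 1} = ⊤ := by
    have := (IntermediateField.adjoin.powerBasis hint).adjoin_gen_eq_top
    have he₁ : e 1 = IntermediateField.AdjoinSimple.gen ℚ (ζ + ζ⁻¹) := Subtype.ext hξ
    rw [IntermediateField.adjoin.powerBasis_gen, ← he₁] at this
    exact this
  rw [hα']
  exact altSum_basis_and_trace _ (by omega) hn hζ he0 he' htop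
end

section
/- Let p ≥ 7 be a prime, n = (p-1)/2, ζ a primitive p-th root of unity in ℂ, K = ℚ(ζ + ζ^{-1}), e_j = ζ^j + ζ^{-j}, and α = 2 - e_1. Define w_1 = -e_1 - 2e_2 - 2e_3 - ⋯ - 2e_n and w_k = e_{k-1} for 2 ≤ k ≤ n. Then for all 1 ≤ i, j ≤ n, Tr_{K/ℚ}(α w_i w_j) / p = (B Bᵀ)_{ij}, the Gram matrix of the standard basis of D_n. Hence the lattice (1/√p)·σ_α(I), where I is the ℤ-span of w_1, …, w_n, is a full-diversity rotated (isometric) copy of D_n in ℝ^n. -/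
open scoped IntermediateField
open Matrix

/-- A primitive `p`-th root of unity has trace `-1` in the `p`-th cyclotomic field. -/
theorem IsPrimitiveRoot.trace_eq_neg_one {p : ℕ} (hp : p.Prime) {L : Type*} [Field L] [Algebra ℚ L]
    [IsCyclotomicExtension {p} ℚ L] {η : L} (hη : IsPrimitiveRoot η p) :
    Algebra.trace ℚ L η = -1 := by
  have : Fact p.Prime := ⟨hp⟩
  have hirr := Polynomial.cyclotomic.irreducible_rat hp.pos
  have h := PowerBasis.trace_gen_eq_nextCoeff_minpoly (hη.powerBasis ℚ)
  rw [hη.powerBasis_gen ℚ, ← hη.minpoly_eq_cyclotomic_of_irreducible hirr] at h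
  have hdeg : (Polynomial.cyclotomic p ℚ).natDegree = p - 1 := by
    rw [Polynomial.natDegree_cyclotomic, Nat.totient_prime hp]
  have h2 := hp.two_le
  rw [h, Polynomial.nextCoeff_of_natDegree_pos (by omega), hdeg, Polynomial.cyclotomic_prime,
    Polynomial.finsetSum_coeff]
  simp only [Polynomial.coeff_X_pow]
  rw [Finset.sum_eq_single (p - 1 - 1)] <;> simp <;> omega

section RealSubfield

variable {p : ℕ} {ζ : ℂ}

/-- The field `ℚ(ζ + ζ⁻¹)` is real. -/
theorem conj_eq_of_mem_adjoin_add_inv (hp : p ≠ 0) (hζ : IsPrimitiveRoot ζ p) {x : ℂ}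
    (hx : x ∈ ℚ⟮ζ + ζ⁻¹⟯) : (starRingEnd ℂ) x = x := by
  have hconj : (starRingEnd ℂ) ζ = ζ⁻¹ :=
    (Complex.inv_eq_conj (hζ.norm'_eq_one hp)).symm
  induction hx using IntermediateField.adjoin_induction with
  | mem x hx =>
    rw [Set.mem_singleton_iff.1 hx, map_add, map_inv₀, hconj, inv_inv, add_comm]
  | algebraMap x => simp
  | add x y _ _ hx hy => rw [map_add, hx, hy]
  | inv x _ hx => rw [map_inv₀, hx]
  | mul x y _ _ hx hy => rw [map_mul, hx, hy]

theorem finrank_adjoin_over_adjoin_add_inv (hp : 2 < p) (hζ : IsPrimitiveRoot ζ p) :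
    Module.finrank ℚ⟮ζ + ζ⁻¹⟯ (ℚ⟮ζ + ζ⁻¹⟯)⟮ζ⟯ = 2 := by
  have hp0 : p ≠ 0 := by omega
  have hζ0 : ζ ≠ 0 := hζ.ne_zero hp0
  let g : ℚ⟮ζ + ζ⁻¹⟯ := IntermediateField.AdjoinSimple.gen ℚ (ζ + ζ⁻¹)
  let q : Polynomial ℚ⟮ζ + ζ⁻¹⟯ := Polynomial.X ^ 2 - Polynomial.C g * Polynomial.X + 1
  have hqdeg : q.natDegree = 2 := by simp only [q]; compute_degree!
  have hqm : q.Monic := by simp only [q]; monicity!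
  have hroot : Polynomial.aeval ζ q = 0 := by
    have hg : algebraMap ℚ⟮ζ + ζ⁻¹⟯ ℂ g = ζ + ζ⁻¹ :=
      IntermediateField.AdjoinSimple.algebraMap_gen ℚ _
    simp only [q, map_add, map_sub, map_pow, map_mul, Polynomial.aeval_X, Polynomial.aeval_C, hg,
      map_one]
    field_simp
    ring
  have hint : IsIntegral ℚ⟮ζ + ζ⁻¹⟯ ζ := ⟨q, hqm, hroot⟩
  rw [IntermediateField.adjoin.finrank hint]
  refine le_antisymm ?_ ?_
  · exact hqdeg ▸ Polynomial.natDegree_le_of_dvd (minpoly.dvd _ _ hroot) hqm.ne_zero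
  · rw [minpoly.two_le_natDegree_iff hint]
    rintro ⟨x, hx⟩
    have h := conj_eq_of_mem_adjoin_add_inv hp0 hζ x.2
    replace hx : (x : ℂ) = ζ := hx
    rw [hx, ← Complex.inv_eq_conj (hζ.norm'_eq_one hp0)] at h
    have h1 : ζ ^ 2 = 1 := by
      rw [pow_two]; nth_rewrite 1 [← h]; exact inv_mul_cancel₀ hζ0
    have := Nat.le_of_dvd two_pos (hζ.dvd_of_pow_eq_one 2 h1)
    omega

theorem isCyclotomicExtension_adjoin_over_adjoin_add_inv (hp : p ≠ 0) (hζ : IsPrimitiveRoot ζ p) :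
    IsCyclotomicExtension {p} ℚ (ℚ⟮ζ + ζ⁻¹⟯)⟮ζ⟯ := by
  have : NeZero p := ⟨hp⟩
  have h : (ℚ⟮ζ + ζ⁻¹⟯)⟮ζ⟯.restrictScalars ℚ = ℚ⟮ζ⟯ := by
    refine (IntermediateField.restrictScalars_adjoin_eq_sup ℚ _ _).trans ?_
    rw [sup_eq_right, IntermediateField.adjoin_simple_le_iff]
    have hmem := IntermediateField.mem_adjoin_simple_self ℚ ζ
    exact add_mem hmem (inv_mem hmem)
  exact (IntermediateField.isCyclotomicExtension_singleton_iff_eq_adjoin p ℚ ℂ _ hζ).2 h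

/-- The trace of `ζ ^ m + ζ ^ (-m)` from `ℚ(ζ + ζ⁻¹)` to `ℚ`. -/
theorem trace_adjoin_add_inv (hp : p.Prime) (hp2 : 2 < p) (hζ : IsPrimitiveRoot ζ p) {m : ℤ}
    {x : ℚ⟮ζ + ζ⁻¹⟯} (hx : (x : ℂ) = ζ ^ m + ζ ^ (-m)) :
    Algebra.trace ℚ ℚ⟮ζ + ζ⁻¹⟯ x = if (p : ℤ) ∣ m then (p : ℚ) - 1 else -1 := by
  have : NeZero p := ⟨hp.ne_zero⟩
  have := isCyclotomicExtension_adjoin_over_adjoin_add_inv hp.ne_zero hζ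
  have h2 := finrank_adjoin_over_adjoin_add_inv hp2 hζ
  have hfin : FiniteDimensional ℚ (ℚ⟮ζ + ζ⁻¹⟯)⟮ζ⟯ :=
    IsCyclotomicExtension.finiteDimensional {p} ℚ _
  have hfinK : FiniteDimensional ℚ ℚ⟮ζ + ζ⁻¹⟯ :=
    FiniteDimensional.left ℚ ℚ⟮ζ + ζ⁻¹⟯ (ℚ⟮ζ + ζ⁻¹⟯)⟮ζ⟯
  have hfinL : FiniteDimensional ℚ⟮ζ + ζ⁻¹⟯ (ℚ⟮ζ + ζ⁻¹⟯)⟮ζ⟯ :=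
    FiniteDimensional.right ℚ ℚ⟮ζ + ζ⁻¹⟯ (ℚ⟮ζ + ζ⁻¹⟯)⟮ζ⟯
  let η : (ℚ⟮ζ + ζ⁻¹⟯)⟮ζ⟯ := IntermediateField.AdjoinSimple.gen _ ζ
  have hη : IsPrimitiveRoot η p :=
    IsPrimitiveRoot.of_map_of_injective (f := algebraMap (ℚ⟮ζ + ζ⁻¹⟯)⟮ζ⟯ ℂ)
      (by simpa [η] using hζ) (algebraMap (ℚ⟮ζ + ζ⁻¹⟯)⟮ζ⟯ ℂ).injective
  have hxη : algebraMap ℚ⟮ζ + ζ⁻¹⟯ (ℚ⟮ζ + ζ⁻¹⟯)⟮ζ⟯ x = η ^ m + η ^ (-m) := by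
    apply (algebraMap (ℚ⟮ζ + ζ⁻¹⟯)⟮ζ⟯ ℂ).injective
    rw [map_add, map_zpow₀, map_zpow₀, IntermediateField.AdjoinSimple.algebraMap_gen, ← hx]
    rfl
  have key : 2 * Algebra.trace ℚ ℚ⟮ζ + ζ⁻¹⟯ x =
      Algebra.trace ℚ (ℚ⟮ζ + ζ⁻¹⟯)⟮ζ⟯ (η ^ m + η ^ (-m)) := by
    rw [← hxη, ← Algebra.trace_trace (S := ℚ⟮ζ + ζ⁻¹⟯) (T := (ℚ⟮ζ + ζ⁻¹⟯)⟮ζ⟯),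
      Algebra.trace_algebraMap, h2, map_nsmul,
      nsmul_eq_mul, Nat.cast_ofNat]
  split_ifs with hm
  · rw [_root_.zpow_neg, (hη.zpow_eq_one_iff_dvd m).2 hm, inv_one, ← map_one (algebraMap ℚ _), ← map_add,
      Algebra.trace_algebraMap,
      IsCyclotomicExtension.finrank _ (Polynomial.cyclotomic.irreducible_rat hp.pos),
      Nat.totient_prime hp, nsmul_eq_mul, Nat.cast_sub hp.one_le] at key
    push_cast at key
    linarith
  · have hprim : ∀ k : ℤ, ¬ (p : ℤ) ∣ k → Algebra.trace ℚ (ℚ⟮ζ + ζ⁻¹⟯)⟮ζ⟯ (η ^ k) = -1 := by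
      intro k hk
      refine IsPrimitiveRoot.trace_eq_neg_one hp (hη.zpow_of_gcd_eq_one k ?_)
      rw [Int.gcd_comm]
      exact (Int.isCoprime_iff_gcd_eq_one).1
        ((Nat.prime_iff_prime_int.1 hp).coprime_iff_not_dvd.2 hk)
    rw [map_add, hprim m hm, hprim (-m) (by rwa [dvd_neg])] at key
    linarith

end RealSubfield

/-- The product of row `i` of the standard basis matrix of `Dₙ` with a vector. -/
theorem sum_DnBasisMatrix_mul {n : ℕ} (hn : 2 ≤ n) (v : Fin n → ℤ) (i : Fin n) :
    ∑ k, DnBasisMatrix n i k * v k =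
      if (i : ℕ) = 0 then -v ⟨0, by omega⟩ - v ⟨1, by omega⟩
      else v ⟨i - 1, by omega⟩ - v i := by
  split_ifs with hi
  · rw [Finset.sum_eq_add_of_mem (⟨0, by omega⟩ : Fin n) ⟨1, by omega⟩ (Finset.mem_univ _)
      (Finset.mem_univ _) (by simp)]
    · simp [DnBasisMatrix, hi]
      ring
    · rintro ⟨k, hk⟩ - ⟨h0, h1⟩
      simp only [ne_eq, Fin.mk.injEq] at h0 h1
      simp only [DnBasisMatrix, Matrix.of_apply, hi, if_true]
      rw [if_neg (by omega), zero_mul]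
  · rw [Finset.sum_eq_add_of_mem (⟨i - 1, by omega⟩ : Fin n) i (Finset.mem_univ _)
      (Finset.mem_univ _) (by rw [ne_eq, Fin.ext_iff]; simp only; omega)]
    · have h : (i : ℕ) - 1 + 1 = i := by omega
      simp [DnBasisMatrix, hi, h]
      ring
    · rintro k - ⟨h0, h1⟩
      have h : (k : ℕ) + 1 ≠ i := fun h => h0 (Fin.ext (by simp only; omega))
      simp [DnBasisMatrix, hi, h, h1]

/-- The Gram matrix of the standard basis of `Dₙ`. -/
theorem DnBasisMatrix_mul_transpose_apply {n : ℕ} (hn : 2 ≤ n) (i j : Fin n) :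
    (DnBasisMatrix n * (DnBasisMatrix n)ᵀ) i j =
      if i = j then 2
      else if (i : ℕ) = 0 then (if (j : ℕ) = 2 then -1 else 0)
      else if (j : ℕ) = 0 then (if (i : ℕ) = 2 then -1 else 0)
      else if (i : ℕ) + 1 = j ∨ (j : ℕ) + 1 = i then -1 else 0 := by
  rw [Matrix.mul_apply]
  simp only [Matrix.transpose_apply]
  rw [sum_DnBasisMatrix_mul hn]
  simp only [DnBasisMatrix, Matrix.of_apply, Fin.ext_iff]
  split_ifs <;> omega

/-- The sum of the conjugates `ζ ^ j + ζ⁻¹ ^ j` of `ζ + ζ⁻¹` is `-1`. -/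
theorem IsPrimitiveRoot.sum_pow_add_inv_pow {n : ℕ} (hn : 0 < n) {ζ : ℂ}
    (hζ : IsPrimitiveRoot ζ (2 * n + 1)) :
    ∑ j ∈ Finset.Icc 1 n, (ζ ^ j + ζ⁻¹ ^ j) = -1 := by
  have hζ0 : ζ ≠ 0 := hζ.ne_zero (by omega)
  have h : ∀ m : ℕ, (ζ - 1) * (∑ j ∈ Finset.Icc 1 m, (ζ ^ j + ζ⁻¹ ^ j) + 1) =
      ζ ^ (m + 1) - ζ⁻¹ ^ m := by
    intro m
    induction m with
    | zero => simp
    | succ m ih =>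
      rw [Finset.sum_Icc_succ_top (by omega), add_right_comm, mul_add, ih, pow_succ ζ⁻¹ m,
        pow_succ ζ (m + 1)]
      linear_combination ζ⁻¹ ^ m * mul_inv_cancel₀ hζ0
  have hpow : ζ ^ (n + 1) = ζ⁻¹ ^ n := by
    rw [inv_pow]
    refine eq_inv_of_mul_eq_one_left ?_
    rw [← pow_add, show n + 1 + n = 2 * n + 1 by ring, hζ.pow_eq_one]
  have hn' := h n
  rw [hpow, sub_self] at hn'
  exact eq_neg_of_add_eq_zero_left
    ((mul_eq_zero.1 hn').resolve_left (sub_ne_zero.2 (hζ.ne_one (by omega))))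

/-- With `K = ℚ(ζ + ζ⁻¹)` for `ζ` a primitive `p`-th root of unity
(`p ≥ 7` prime), `n = (p-1)/2`, `α = 2 - e₁`, `w₁ = -e₁ - 2e₂ - ⋯ - 2eₙ` and
`wₖ = e_{k-1}` for `2 ≤ k ≤ n` (`0`-indexed below), one has
`Tr(α wᵢ wⱼ)/p = (B Bᵀ)_{ij}`: the lattice `(1/√p)·σ_α(I)` is a full-diversity
rotated copy of `Dₙ`. -/
theorem rotated_Dn_odd_prime
    (p n : ℕ) (hp : p.Prime) (hp7 : 7 ≤ p) (hn : p = 2 * n + 1)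
    (ζ : ℂ) (hζ : IsPrimitiveRoot ζ p)
    (e : ℕ → ℚ⟮ζ + ζ⁻¹⟯)
    (he : ∀ j : ℕ, 1 ≤ j → ((e j : ℂ) = ζ ^ j + ζ⁻¹ ^ j))
    (α : ℚ⟮ζ + ζ⁻¹⟯) (hα : α = 2 - e 1)
    (w : Fin n → ℚ⟮ζ + ζ⁻¹⟯)
    (hw0 : ∀ h0 : 0 < n, w ⟨0, h0⟩ = -e 1 - ∑ j ∈ Finset.Icc 2 n, 2 * e j)
    (hwk : ∀ k : Fin n, 1 ≤ (k : ℕ) → w k = e (k : ℕ)) :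
    ∀ i j : Fin n,
      Algebra.trace ℚ ℚ⟮ζ + ζ⁻¹⟯ (α * w i * w j) =
        (p : ℚ) * (((DnBasisMatrix n * (DnBasisMatrix n)ᵀ) i j : ℤ) : ℚ) := by
  have hζ0 : ζ ≠ 0 := hζ.ne_zero hp.ne_zero
  obtain ⟨c, hc⟩ : ∃ c : ℤ → ℚ⟮ζ + ζ⁻¹⟯, ∀ m, (c m : ℂ) = ζ ^ m + ζ ^ (-m) := by
    have : ∀ m : ℤ, ∃ x : ℚ⟮ζ + ζ⁻¹⟯, (x : ℂ) = ζ ^ m + ζ ^ (-m) := by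
      intro m
      obtain ⟨k, rfl | rfl⟩ := m.eq_nat_or_neg
      all_goals
        rcases Nat.eq_zero_or_pos k with rfl | hk
        · exact ⟨2, by norm_num; rfl⟩
        · exact ⟨e k, by simp [he k hk, add_comm]⟩
    choose c hc using this
    exact ⟨c, hc⟩
  have hec : ∀ k : ℕ, 1 ≤ k → e k = c k := fun k hk => Subtype.ext (by simp [he k hk, hc])
  have hmul : ∀ a b, c a * c b = c (a + b) + c (a - b) := by
    intro a b
    apply Subtype.ext
    rw [MulMemClass.coe_mul, AddMemClass.coe_add, hc, hc, hc, hc]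
    simp only [neg_add, neg_neg, sub_eq_add_neg, zpow_add₀ hζ0]
    ring
  have hzero : c 0 = 2 := Subtype.ext (by rw [hc]; norm_num; rfl)
  have htr : ∀ m, Algebra.trace ℚ ℚ⟮ζ + ζ⁻¹⟯ (c m) = p * (if (p : ℤ) ∣ m then 1 else 0) - 1 := by
    intro m
    rw [trace_adjoin_add_inv hp (by omega) hζ (hc m)]
    split_ifs <;> ring
  have hw0' : w ⟨0, by omega⟩ = 2 + c 1 := by
    have hsum : ∑ j ∈ Finset.Icc 1 n, e j = -1 := by
      apply Subtype.ext
      subst hn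
      have := hζ.sum_pow_add_inv_pow (by omega)
      push_cast
      rw [← this]
      exact Finset.sum_congr rfl fun j hj => he j (Finset.mem_Icc.1 hj).1
    rw [← Finset.add_sum_Ioc_eq_sum_Icc (by omega)] at hsum
    have hIoc : Finset.Ioc 1 n = Finset.Icc 2 n := by ext; simp; omega
    rw [hIoc] at hsum
    have h1 := hec 1 le_rfl
    rw [Nat.cast_one] at h1
    rw [hw0, ← Finset.mul_sum, ← h1]
    linear_combination -2 * hsum
  have hα' : α = c 0 - c 1 := by rw [hα, hzero, hec 1 le_rfl, Nat.cast_one]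
  have hdvd : ∀ m : ℤ, -(p : ℤ) < m → m < p → ((p : ℤ) ∣ m ↔ m = 0) := fun m h1 h2 =>
    ⟨fun h => Int.eq_zero_of_abs_lt_dvd h (abs_lt.2 ⟨h1, h2⟩), fun h => h ▸ dvd_zero _⟩
  have hdiag : Algebra.trace ℚ ℚ⟮ζ + ζ⁻¹⟯ (α * (2 + c 1) * (2 + c 1)) = p * 2 := by
    have hexp : α * (2 + c 1) * (2 + c 1) = c 0 + c 0 + c 1 - c 2 - c 2 - c 3 := by
      have h11 := hmul 1 1
      have h21 := hmul 2 1
      norm_num at h11 h21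
      rw [hα', hzero] at *
      linear_combination (-2 - c 1) * h11 - h21
    rw [hexp]
    simp only [map_add, map_sub, htr]
    rw [if_pos (dvd_zero _)]
    simp only [hdvd 1 (by omega) (by omega), hdvd 2 (by omega) (by omega),
      hdvd 3 (by omega) (by omega)]
    norm_num
    ring
  have hrow : ∀ k : ℕ, 1 ≤ k → k < n → Algebra.trace ℚ ℚ⟮ζ + ζ⁻¹⟯ (α * (2 + c 1) * c k) =
      p * (if k = 2 then -1 else 0) := by
    intro k hk hkn
    have hexp : α * (2 + c 1) * c k = c k + c k - c (k + 2) - c (k - 2) := by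
      have h11 := hmul 1 1
      have hk2 := hmul k 2
      norm_num at h11
      rw [hα', hzero] at *
      linear_combination (-c k) * h11 - hk2
    rw [hexp]
    simp only [map_add, map_sub, htr]
    simp only [hdvd k (by omega) (by omega), hdvd (k + 2) (by omega) (by omega),
      hdvd (k - 2) (by omega) (by omega)]
    split_ifs <;> first | omega | ring
  have hblock : ∀ k l : ℕ, 1 ≤ k → k < n → 1 ≤ l → l < n →
      Algebra.trace ℚ ℚ⟮ζ + ζ⁻¹⟯ (α * c k * c l) =
        p * (if k = l then 2 else if k + 1 = l ∨ l + 1 = k then -1 else 0) := by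
    intro k l hk hkn hl hln
    have hexp : α * c k * c l = c (k + l) + c (k + l) + c (k - l) + c (k - l)
        - c (k + l + 1) - c (k + l - 1) - c (k - l + 1) - c (k - l - 1) := by
      have h1 := hmul k l
      have h2 := hmul (k + l) 1
      have h3 := hmul (k - l) 1
      rw [hα', hzero] at *
      linear_combination (2 - c 1) * h1 - h2 - h3
    rw [hexp]
    simp only [map_add, map_sub, htr]
    simp only [hdvd (k + l) (by omega) (by omega), hdvd (k - l) (by omega) (by omega),
      hdvd (k + l + 1) (by omega) (by omega), hdvd (k + l - 1) (by omega) (by omega),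
      hdvd (k - l + 1) (by omega) (by omega), hdvd (k - l - 1) (by omega) (by omega)]
    split_ifs <;> first | omega | ring
  have hwc : ∀ k : Fin n, 1 ≤ (k : ℕ) → w k = c (k : ℕ) := fun k hk => by rw [hwk k hk, hec _ hk]
  have hwz : ∀ k : Fin n, (k : ℕ) = 0 → w k = 2 + c 1 := fun k hk => by
    rw [← hw0']; exact congrArg w (Fin.ext hk)
  intro i j
  rw [DnBasisMatrix_mul_transpose_apply (by omega)]
  rcases Nat.eq_zero_or_pos (i : ℕ) with hi | hi <;> rcases Nat.eq_zero_or_pos (j : ℕ) with hj | hj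
  · rw [hwz i hi, hwz j hj, hdiag, if_pos (Fin.ext (hi.trans hj.symm))]
    norm_num
  · have hij : i ≠ j := fun h => by subst h; omega
    rw [hwz i hi, hwc j hj, hrow j hj j.2, if_neg hij, if_pos hi]
    push_cast
    rfl
  · have hij : i ≠ j := fun h => by subst h; omega
    rw [hwc i hi, hwz j hj, mul_right_comm, hrow i hi i.2, if_neg hij, if_neg hi.ne', if_pos hj]
    push_cast
    rfl
  · rw [hwc i hi, hwc j hj, hblock i j hi i.2 hj j.2, if_neg hi.ne', if_neg hj.ne']
    push_cast
    simp only [Fin.ext_iff]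
end
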